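/- Let E and F be real Hilbert spaces (complete real inner product spaces), Θ ⊆ E and U ⊆ F nonempty closed convex sets, η_θ > 0 and η_μ > 0 real numbers, θ ∈ Θ, μ ∈ U, g, v_θ ∈ E, and h, v_μ ∈ F. Let θ⁺ ∈ Θ be the metric projection of θ + η_θ • g onto Θ and μ⁺ ∈ U the metric projection of μ + η_μ • h onto U. Then (sSup {⟪v_μ, μ' − μ⁺⟫ | μ' ∈ U, ‖μ' − μ⁺‖ ≤ 1})² + (sSup {⟪v_θ, θ' − θ⟫ | θ' ∈ Θ, ‖θ' − θ‖ ≤ 1})² ≤ (2/η_μ²) · ‖μ⁺ − μ‖² + 2 · ‖v_μ − h‖² + 2 · (1/η_θ + ‖g‖)² · ‖θ⁺ − θ‖² + 2 · ‖v_θ − g‖². (Both suprema are over nonempty sets containing the value 0 and bounded above by ‖v_μ‖ and ‖v_θ‖ respectively.) -/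

import Mathlib

open scoped RealInnerProductSpace

/-!
A metric projection `p` of the gradient step `x + η • g` satisfies the variational inequality
`η ⟪g, w - p⟫ ≤ ⟪p - x, w - p⟫` for all `w` in the convex set. Testing it on the unit ball around
`p` (dual update) or around `x` (primal update) bounds the stationarity measure of the sampled
gradient `g` by a multiple of the step length. Replacing `g` by the true gradient `v` costs at most
`‖v - g‖`, and `(a + b)² ≤ 2 (a² + b²)` separates the two contributions.
-/

section ProjectedGradientStep

variable {E : Type*} [NormedAddCommGroup E] [InnerProductSpace ℝ E]
  {K : Set E} {x y p u g v w : E} {η a : ℝ}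

lemma real_inner_le_norm_of_norm_le_one (v : E) (hw : ‖w‖ ≤ 1) : ⟪v, w⟫ ≤ ‖v‖ :=
  (real_inner_le_norm v w).trans (mul_le_of_le_one_right (norm_nonneg v) hw)

/-- `p` is a metric projection of `u` onto `K`: a point of `K` nearest to `u`. A predicate rather
than a function, so that neither existence nor uniqueness of nearest points is presupposed. -/
structure IsMetricProjection (K : Set E) (u p : E) : Prop where
  mem : p ∈ K
  norm_sub_le : ∀ y ∈ K, ‖u - p‖ ≤ ‖u - y‖

/-- The first-order stationarity measure of the gradient `v` at `x`: the largest first-order ascent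
over the points of `K` at distance at most `1` from `x`. The paper's `𝒳` and `𝒴` are its values
for the primal and the dual Lagrangian gradient. For `x ∈ K` the supremum is over a nonempty
bounded set, hence never a junk value. -/
noncomputable def stationarityMeasure (K : Set E) (x v : E) : ℝ :=
  sSup {r : ℝ | ∃ y ∈ K, ‖y - x‖ ≤ 1 ∧ r = ⟪v, y - x⟫}

namespace IsMetricProjection

lemma inner_sub_sub_nonpos (hp : IsMetricProjection K u p) (hK : Convex ℝ K) (hw : w ∈ K) :
    ⟪u - p, w - p⟫ ≤ 0 := by
  have : Nonempty K := ⟨⟨p, hp.mem⟩⟩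
  have norm_bddBelow : BddBelow (Set.range fun y : K => ‖u - y‖) :=
    ⟨0, Set.forall_mem_range.2 fun _ => norm_nonneg _⟩
  have norm_eq_iInf : ‖u - p‖ = ⨅ y : K, ‖u - y‖ :=
    le_antisymm (le_ciInf fun y => hp.norm_sub_le y y.2) (ciInf_le norm_bddBelow ⟨p, hp.mem⟩)
  exact (norm_eq_iInf_iff_real_inner_le_zero hK hp.mem).1 norm_eq_iInf w hw

lemma inner_le_one_div_mul_inner (hp : IsMetricProjection K (x + η • g) p) (hK : Convex ℝ K)
    (hη : 0 < η) (hw : w ∈ K) : ⟪g, w - p⟫ ≤ 1 / η * ⟪p - x, w - p⟫ := by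
  have variational : ⟪η • g - (p - x), w - p⟫ ≤ 0 := by
    convert hp.inner_sub_sub_nonpos hK hw using 2
    abel
  rw [inner_sub_left, real_inner_smul_left] at variational
  rw [one_div_mul_eq_div, le_div_iff₀' hη]
  linarith

end IsMetricProjection

lemma stationarityMeasure_nonneg (hx : x ∈ K) : 0 ≤ stationarityMeasure K x v :=
  Real.sSup_nonneg' ⟨0, ⟨x, hx, by simp, by simp⟩, le_rfl⟩

lemma stationarityMeasure_le (hx : x ∈ K) (h : ∀ y ∈ K, ‖y - x‖ ≤ 1 → ⟪v, y - x⟫ ≤ a) :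
    stationarityMeasure K x v ≤ a := by
  refine csSup_le ⟨0, x, hx, by simp, by simp⟩ ?_
  rintro _ ⟨y, hy, hyx, rfl⟩
  exact h y hy hyx

lemma inner_le_stationarityMeasure (hy : y ∈ K) (hyx : ‖y - x‖ ≤ 1) :
    ⟪v, y - x⟫ ≤ stationarityMeasure K x v := by
  refine le_csSup ⟨‖v‖, ?_⟩ ⟨y, hy, hyx, rfl⟩
  rintro _ ⟨z, -, hzx, rfl⟩
  exact real_inner_le_norm_of_norm_le_one v hzx

lemma stationarityMeasure_le_add_norm_sub (hx : x ∈ K) :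
    stationarityMeasure K x v ≤ stationarityMeasure K x g + ‖v - g‖ :=
  stationarityMeasure_le hx fun y hy hyx => calc
    ⟪v, y - x⟫ = ⟪g, y - x⟫ + ⟪v - g, y - x⟫ := by rw [← inner_add_left, add_sub_cancel]
    _ ≤ stationarityMeasure K x g + ‖v - g‖ :=
      add_le_add (inner_le_stationarityMeasure hy hyx) (real_inner_le_norm_of_norm_le_one _ hyx)

lemma stationarityMeasure_sq_le (hx : x ∈ K) (hg : stationarityMeasure K x g ≤ a) :
    stationarityMeasure K x v ^ 2 ≤ 2 * a ^ 2 + 2 * ‖v - g‖ ^ 2 := calc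
  stationarityMeasure K x v ^ 2 ≤ (a + ‖v - g‖) ^ 2 := by
    gcongr
    · exact stationarityMeasure_nonneg hx
    · exact (stationarityMeasure_le_add_norm_sub hx).trans (by gcongr)
  _ ≤ 2 * a ^ 2 + 2 * ‖v - g‖ ^ 2 := by
    rw [← mul_add]
    exact add_sq_le

namespace IsMetricProjection

lemma stationarityMeasure_projection_le (hp : IsMetricProjection K (x + η • g) p)
    (hK : Convex ℝ K) (hη : 0 < η) : stationarityMeasure K p g ≤ 1 / η * ‖p - x‖ :=
  stationarityMeasure_le hp.mem fun y hy hyp => calc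
    ⟪g, y - p⟫ ≤ 1 / η * ⟪p - x, y - p⟫ := hp.inner_le_one_div_mul_inner hK hη hy
    _ ≤ 1 / η * ‖p - x‖ := by
      gcongr
      exact real_inner_le_norm_of_norm_le_one _ hyp

lemma stationarityMeasure_base_le (hp : IsMetricProjection K (x + η • g) p)
    (hK : Convex ℝ K) (hη : 0 < η) (hx : x ∈ K) :
    stationarityMeasure K x g ≤ (1 / η + ‖g‖) * ‖p - x‖ := by
  refine stationarityMeasure_le hx fun y hy hyx => ?_
  have inner_step_le : ⟪p - x, y - p⟫ ≤ ‖p - x‖ := calc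
    ⟪p - x, y - p⟫ = ⟪p - x, y - x⟫ - ‖p - x‖ ^ 2 := by
      rw [← real_inner_self_eq_norm_sq, ← inner_sub_right, sub_sub_sub_cancel_right]
    _ ≤ ⟪p - x, y - x⟫ := sub_le_self _ (sq_nonneg _)
    _ ≤ ‖p - x‖ := real_inner_le_norm_of_norm_le_one _ hyx
  calc
    ⟪g, y - x⟫ = ⟪g, y - p⟫ + ⟪g, p - x⟫ := by rw [← inner_add_right, sub_add_sub_cancel]
    _ ≤ 1 / η * ⟪p - x, y - p⟫ + ‖g‖ * ‖p - x‖ :=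
      add_le_add (hp.inner_le_one_div_mul_inner hK hη hy) (real_inner_le_norm _ _)
    _ ≤ 1 / η * ‖p - x‖ + ‖g‖ * ‖p - x‖ := by gcongr
    _ = (1 / η + ‖g‖) * ‖p - x‖ := (add_mul _ _ _).symm

end IsMetricProjection

end ProjectedGradientStep

theorem stmt_14_general {E F : Type*}
    [NormedAddCommGroup E] [InnerProductSpace ℝ E] [NormedAddCommGroup F] [InnerProductSpace ℝ F]
    {Θ : Set E} (hΘ : Convex ℝ Θ) {U : Set F} (hU : Convex ℝ U)
    {ηθ ημ : ℝ} (hηθ : 0 < ηθ) (hημ : 0 < ημ)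
    {θ θp g : E} (vθ : E) {μ μp h : F} (vμ : F) (hθ : θ ∈ Θ)
    (hθp : IsMetricProjection Θ (θ + ηθ • g) θp) (hμp : IsMetricProjection U (μ + ημ • h) μp) :
    stationarityMeasure U μp vμ ^ 2 + stationarityMeasure Θ θ vθ ^ 2
      ≤ (2 / ημ ^ 2) * ‖μp - μ‖ ^ 2 + 2 * ‖vμ - h‖ ^ 2
          + 2 * (1 / ηθ + ‖g‖) ^ 2 * ‖θp - θ‖ ^ 2 + 2 * ‖vθ - g‖ ^ 2 := by
  have dual_bound := stationarityMeasure_sq_le (v := vμ) hμp.mem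
    (hμp.stationarityMeasure_projection_le hU hημ)
  have primal_bound := stationarityMeasure_sq_le (v := vθ) hθ
    (hθp.stationarityMeasure_base_le hΘ hηθ hθ)
  calc
    _ ≤ (2 * (1 / ημ * ‖μp - μ‖) ^ 2 + 2 * ‖vμ - h‖ ^ 2)
        + (2 * ((1 / ηθ + ‖g‖) * ‖θp - θ‖) ^ 2 + 2 * ‖vθ - g‖ ^ 2) :=
      add_le_add dual_bound primal_bound
    _ = _ := by ring

theorem stmt_14 {E F : Type*}
    [NormedAddCommGroup E] [InnerProductSpace ℝ E] [CompleteSpace E]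
    [NormedAddCommGroup F] [InnerProductSpace ℝ F] [CompleteSpace F]
    (Θ : Set E) (hΘne : Θ.Nonempty) (hΘcl : IsClosed Θ) (hΘconv : Convex ℝ Θ)
    (U : Set F) (hUne : U.Nonempty) (hUcl : IsClosed U) (hUconv : Convex ℝ U)
    (ηθ ημ : ℝ) (hηθ : 0 < ηθ) (hημ : 0 < ημ)
    (θ : E) (hθ : θ ∈ Θ) (μ : F) (hμ : μ ∈ U)
    (g vθ : E) (h vμ : F)
    (θp : E) (hθp : θp ∈ Θ)
    (hθproj : ∀ y ∈ Θ, ‖(θ + ηθ • g) - θp‖ ≤ ‖(θ + ηθ • g) - y‖)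
    (μp : F) (hμp : μp ∈ U)
    (hμproj : ∀ y ∈ U, ‖(μ + ημ • h) - μp‖ ≤ ‖(μ + ημ • h) - y‖) :
    (sSup {r : ℝ | ∃ μ' ∈ U, ‖μ' - μp‖ ≤ 1 ∧ r = ⟪vμ, μ' - μp⟫}) ^ 2
        + (sSup {r : ℝ | ∃ θ' ∈ Θ, ‖θ' - θ‖ ≤ 1 ∧ r = ⟪vθ, θ' - θ⟫}) ^ 2
      ≤ (2 / ημ ^ 2) * ‖μp - μ‖ ^ 2 + 2 * ‖vμ - h‖ ^ 2
          + 2 * (1 / ηθ + ‖g‖) ^ 2 * ‖θp - θ‖ ^ 2 + 2 * ‖vθ - g‖ ^ 2 :=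
  stmt_14_general hΘconv hUconv hηθ hημ vθ vμ hθ ⟨hθp, hθproj⟩ ⟨hμp, hμproj⟩
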